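/- Let R be a commutative ring with unity. The class of locally injective R-modules is λ-categorical in all cardinals λ > card(R) + ℵ₀ if and only if R is a local artinian ring. -/

import Mathlib

/-! Statement 8: for a commutative ring `R`, the class of locally injective `R`-modules is
categorical in all cardinals `> card R + ℵ₀` iff `R` is a local artinian ring. -/

universe u

open Cardinal

/-- A class `K` of left `R`-modules is `c`-categorical if it contains a module of
cardinality `c` and any two modules in `K` of cardinality `c` are isomorphic. -/
def Categorical (R : Type u) [Ring R] (K : ModuleCat.{u} R → Prop) (c : Cardinal.{u}) : Prop :=
  (∃ M : ModuleCat.{u} R, K M ∧ #M = c) ∧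
    ∀ M N : ModuleCat.{u} R, K M → K N → #M = c → #N = c → Nonempty (M ≃ₗ[R] N)

/-- A module `M` is locally injective if every finite subset of `M` is contained in an
injective submodule of `M`. -/
def LocallyInjective (R : Type u) [Ring R] (M : Type u) [AddCommGroup M]
    [Module R M] : Prop :=
  ∀ s : Finset M, ∃ N : Submodule R M, (s : Set M) ⊆ (N : Set M) ∧ Module.Injective R N

section helpers
variable {R : Type u} [CommRing R]

theorem inj_retract {A B : Type u} [AddCommGroup A] [Module R A] [AddCommGroup B] [Module R B]
    (i : A →ₗ[R] B) (p : B →ₗ[R] A) (h : ∀ a, p (i a) = a) (hB : Module.Injective R B) :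
    Module.Injective R A := by
  refine ⟨fun X Y _ _ _ _ f hf g => ?_⟩
  obtain ⟨k, hk⟩ := hB.out f hf (i ∘ₗ g)
  exact ⟨p ∘ₗ k, fun x => by simp [hk, h]⟩

theorem inj_equiv {A B : Type u} [AddCommGroup A] [Module R A] [AddCommGroup B] [Module R B]
    (e : A ≃ₗ[R] B) (hB : Module.Injective R B) : Module.Injective R A :=
  inj_retract e.toLinearMap e.symm.toLinearMap (by simp) hB

theorem inj_prod {A B : Type u} [AddCommGroup A] [Module R A] [AddCommGroup B] [Module R B]
    (hA : Module.Injective R A) (hB : Module.Injective R B) : Module.Injective R (A × B) := by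
  refine ⟨fun X Y _ _ _ _ f hf g => ?_⟩
  obtain ⟨k, hk⟩ := hA.out f hf (LinearMap.fst R A B ∘ₗ g)
  obtain ⟨l, hl⟩ := hB.out f hf (LinearMap.snd R A B ∘ₗ g)
  exact ⟨k.prod l, fun x => by ext <;> simp [hk, hl]⟩

theorem exists_inj_embed (A : Type u) [AddCommGroup A] [Module R A] :
    ∃ Q : ModuleCat.{u} R, Module.Injective R Q ∧ ∃ f : A →ₗ[R] Q, Function.Injective f := by
  let P := CategoryTheory.Injective.under (ModuleCat.of R A)
  refine ⟨P, ?_, (CategoryTheory.Injective.ι (ModuleCat.of R A)).hom, ?_⟩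
  · have : CategoryTheory.Injective (ModuleCat.of R P) :=
      inferInstanceAs (CategoryTheory.Injective P)
    exact (Module.injective_iff_injective_object R P).2 this
  · exact (ModuleCat.mono_iff_injective _).1 inferInstance

theorem inj_locally {A : Type u} [AddCommGroup A] [Module R A] (hA : Module.Injective R A) :
    LocallyInjective R A := fun s =>
  ⟨⊤, by simp, inj_equiv Submodule.topEquiv hA⟩

theorem locally_prod {A B : Type u} [AddCommGroup A] [Module R A] [AddCommGroup B] [Module R B]
    (hA : LocallyInjective R A) (hB : LocallyInjective R B) : LocallyInjective R (A × B) := by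
  classical
  intro s
  obtain ⟨N, hN, iN⟩ := hA (s.image Prod.fst)
  obtain ⟨L, hL, iL⟩ := hB (s.image Prod.snd)
  refine ⟨N.prod L, fun x hx => ⟨hN ?_, hL ?_⟩, 
    inj_retract
      (((LinearMap.fst R A B ∘ₗ (N.prod L).subtype).codRestrict N fun x => x.2.1).prod
        ((LinearMap.snd R A B ∘ₗ (N.prod L).subtype).codRestrict L fun x => x.2.2))
      ((N.subtype.prodMap L.subtype).codRestrict (N.prod L) fun x => ⟨x.1.2, x.2.2⟩)
      (fun x => rfl) (inj_prod iN iL)⟩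
  · simpa using ⟨x.2, hx⟩
  · simpa using ⟨x.1, hx⟩

theorem noeth_locally_inj [IsNoetherianRing R] {A : Type u} [AddCommGroup A] [Module R A]
    (hA : LocallyInjective R A) : Module.Injective R A := by
  classical
  apply Module.Baer.injective
  intro I g
  have hfg : (LinearMap.range g).FG := by
    rw [LinearMap.range_eq_map]
    exact Submodule.FG.map _ (Module.Finite.fg_top)
  obtain ⟨s, hs⟩ := hfg
  obtain ⟨N, hN, iN⟩ := hA s
  have hr : ∀ x, g x ∈ N := fun x => by
    have : LinearMap.range g ≤ N := by rw [← hs, Submodule.span_le]; exact hN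
    exact this ⟨x, rfl⟩
  obtain ⟨k, hk⟩ := Module.Baer.of_injective iN I (g.codRestrict N hr)
  exact ⟨N.subtype ∘ₗ k, fun x hx => by simp [hk x hx]⟩

def CatAll (R : Type u) [CommRing R] : Prop := (∀ c : Cardinal.{u}, #R + ℵ₀ < c →
      Categorical R (fun M => LocallyInjective R (M : Type u)) c)

theorem cat_swallow (h : CatAll R) {Q L : Type u} [AddCommGroup Q] [Module R Q] [AddCommGroup L] [Module R L]
    (hQ : LocallyInjective R Q) (hL : LocallyInjective R L) (hc : #R + ℵ₀ < #Q) (hLQ : #L ≤ #Q) :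
    Nonempty (Q ≃ₗ[R] L × Q) := by
  refine (h #Q hc).2 (ModuleCat.of R Q) (ModuleCat.of R (L × Q)) hQ (locally_prod hL hQ) rfl ?_
  show #(L × Q) = #Q
  rw [mk_prod, lift_id, lift_id]
  exact mul_eq_right (le_trans (self_le_add_left _ _) hc.le) hLQ (mk_ne_zero L)

theorem cat_nontrivial (h : CatAll R) : Nontrivial R := by
  by_contra hn
  rw [not_nontrivial_iff_subsingleton] at hn
  obtain ⟨⟨M, -, hM⟩, -⟩ := h (Order.succ (#R + ℵ₀)) (Order.lt_succ _)
  have : Subsingleton M := Module.subsingleton R M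
  have h1 : #M ≤ 1 := Cardinal.le_one_iff_subsingleton.2 this
  have h2 : #R + ℵ₀ < #M := hM ▸ Order.lt_succ _
  exact absurd (h2.trans_le h1) (not_lt.2 (one_le_aleph0.trans (self_le_add_left _ _)))

/-- big injective containing a given module -/
theorem exists_big (h : Nontrivial R) (A : Type u) [AddCommGroup A] [Module R A] :
    ∃ Q : ModuleCat.{u} R, Module.Injective R Q ∧ #R + ℵ₀ < #Q ∧ #A ≤ #Q := by
  let X := (Order.succ (#R + ℵ₀)).out
  obtain ⟨Q, hQ, f, hf⟩ := exists_inj_embed (R := R) ((X →₀ R) × A)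
  refine ⟨Q, hQ, ?_, ?_⟩
  · have : #X ≤ #Q := mk_le_of_injective (f := fun x => f (Finsupp.single x 1, 0)) (fun x y hxy => by
      have := hf hxy
      simp only [Prod.mk.injEq, and_true] at this
      exact Finsupp.single_left_injective one_ne_zero this)
    rw [mk_out] at this
    exact (Order.lt_succ _).trans_le this
  · exact mk_le_of_injective (f := fun x => f (0, x)) (fun x y hxy => by
      simpa using hf hxy)

theorem cat_inj (h : CatAll R) {L : Type u} [AddCommGroup L] [Module R L] (hL : LocallyInjective R L) :
    Module.Injective R L := by
  obtain ⟨Q, hQ, h1, h2⟩ := exists_big (cat_nontrivial h) L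
  obtain ⟨e⟩ := cat_swallow h (inj_locally hQ) hL h1 h2
  exact inj_retract (e.symm.toLinearMap ∘ₗ LinearMap.inl R L Q) (LinearMap.fst R L Q ∘ₗ e.toLinearMap)
    (by simp) hQ

theorem locally_finsupp {ι E : Type u} [AddCommGroup E] [Module R E] (hE : Module.Injective R E) :
    LocallyInjective R (ι →₀ E) := by
  classical
  intro s
  let S : Finset ι := s.biUnion Finsupp.support
  refine ⟨Finsupp.supported E R (S : Set ι), ?_, ?_⟩
  · intro f hf
    rw [SetLike.mem_coe, Finsupp.mem_supported]
    exact_mod_cast Finset.subset_biUnion_of_mem Finsupp.support hf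
  · exact inj_equiv ((Finsupp.supportedEquivFinsupp (S : Set ι)).trans
      (Finsupp.linearEquivFunOnFinite R E (S : Set ι))) (Module.Injective.pi R (fun _ => E))

theorem cat_noeth (h : CatAll R) : IsNoetherianRing R := by
  rw [isNoetherianRing_iff, ← monotone_stabilizes_iff_noetherian]
  intro I
  obtain ⟨E, hE, f, hf⟩ := exists_inj_embed (R := R) (∀ n : ℕ, R ⧸ I n)
  have hL := cat_inj h (locally_finsupp (ι := ULift.{u} ℕ) hE)
  let J : Ideal R := ⨆ n, I n
  have hJ : ∀ x, x ∈ J ↔ ∃ n, x ∈ I n := fun x =>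
    Submodule.mem_iSup_of_directed _ I.monotone.directed_le
  let g0 : R →ₗ[R] (ULift.{u} ℕ → E) := LinearMap.pi fun n =>
    f ∘ₗ LinearMap.single R (fun n : ℕ => R ⧸ I n) n.down ∘ₗ (I n.down).mkQ
  have g0z : ∀ n x, g0 x n = 0 ↔ x ∈ I n.down := by
    intro n x
    show f _ = 0 ↔ _
    rw [map_eq_zero_iff f hf]
    simp only [LinearMap.comp_apply, LinearMap.coe_single, Pi.single_eq_zero_iff,
      Submodule.mkQ_apply, Submodule.Quotient.mk_eq_zero]
  have hfin : ∀ x ∈ J, (Function.support (g0 x)).Finite := by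
    intro x hx
    obtain ⟨n, hn⟩ := (hJ x).1 hx
    refine ((Set.finite_lt_nat n).preimage (f := ULift.down) ULift.down_injective.injOn).subset ?_
    intro m hm
    by_contra hc
    simp only [Set.mem_preimage, Set.mem_ofPred_eq, not_lt] at hc
    exact hm ((g0z _ _).2 (I.monotone hc hn))
  let g : J →ₗ[R] (ULift.{u} ℕ →₀ E) :=
    { toFun := fun x => Finsupp.ofSupportFinite (g0 x) (hfin x x.2)
      map_add' := fun x y => by ext n; simp [Finsupp.ofSupportFinite_coe]
      map_smul' := fun x y => by
        ext n
        show g0 (x • (y : R)) n = x • g0 y n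
        rw [map_smul]; rfl }
  obtain ⟨k, hk⟩ := Module.Baer.of_injective hL J g
  obtain ⟨n, hn⟩ : ∃ n, n ∉ (k 1).support := Infinite.exists_notMem_finset _
  rw [Finsupp.notMem_support_iff] at hn
  have hJn : J ≤ I n.down := by
    intro x hx
    rw [← g0z]
    have := congrArg (fun z => z n) (hk x hx)
    have h2 : k x = x • k 1 := by rw [← map_smul]; simp
    rw [h2] at this
    simp only [Finsupp.smul_apply, hn, smul_zero] at this
    exact this.symm
  exact ⟨n.down, fun m hm => le_antisymm (I.monotone hm) ((le_iSup I m).trans hJn)⟩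


theorem inj_ext {J X Y : Type u} [AddCommGroup J] [Module R J] [AddCommGroup X] [Module R X]
    [AddCommGroup Y] [Module R Y] (hJ : Module.Injective R J) (f : X →ₗ[R] Y) (g : X →ₗ[R] J)
    (h : LinearMap.ker f ≤ LinearMap.ker g) : ∃ k : Y →ₗ[R] J, ∀ x, k (f x) = g x := by
  have hi : Function.Injective ((LinearMap.ker f).liftQ f le_rfl) := by
    rw [← LinearMap.ker_eq_bot]; exact Submodule.ker_liftQ_eq_bot _ _ _ le_rfl
  obtain ⟨k, hk⟩ := hJ.out _ hi ((LinearMap.ker f).liftQ g h)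
  exact ⟨k, fun x => by simpa using hk (Submodule.Quotient.mk x)⟩

def Gam (m : Ideal R) (J : Type u) [AddCommGroup J] [Module R J] : Submodule R J where
  carrier := {y | ∃ n, ∀ a ∈ m ^ n, a • y = 0}
  zero_mem' := ⟨0, by simp⟩
  add_mem' := by
    rintro x y ⟨n, hn⟩ ⟨k, hk⟩
    refine ⟨n + k, fun a ha => ?_⟩
    rw [smul_add, hn a (Ideal.pow_le_pow_right (by omega) ha),
      hk a (Ideal.pow_le_pow_right (by omega) ha), add_zero]
  smul_mem' := by
    rintro r x ⟨n, hn⟩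
    exact ⟨n, fun a ha => by rw [smul_comm, hn a ha, smul_zero]⟩

theorem mem_Gam {m : Ideal R} {J : Type u} [AddCommGroup J] [Module R J] {y : J} :
    y ∈ Gam m J ↔ ∃ n, ∀ a ∈ m ^ n, a • y = 0 := Iff.rfl

theorem Gam_inj [IsNoetherianRing R] (m : Ideal R) {J : Type u} [AddCommGroup J] [Module R J]
    (hJ : Module.Injective R J) : Module.Injective R (Gam m J) := by
  apply Module.Baer.injective
  intro I g
  have hN : ∃ N, ∀ x : I, ∀ a ∈ m ^ N, a • (g x : J) = 0 := by
    obtain ⟨s, hs⟩ := (Module.Finite.fg_top : (⊤ : Submodule R I).FG)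
    choose n hn using fun x : I => (g x).2
    refine ⟨s.sup n, fun x a ha => ?_⟩
    have hx : x ∈ Submodule.span R (s : Set I) := hs ▸ Submodule.mem_top
    induction hx using Submodule.span_induction with
    | mem x hx => exact hn x a (Ideal.pow_le_pow_right (Finset.le_sup hx) ha)
    | zero => simp
    | add x y _ _ h1 h2 => simp [h1, h2]
    | smul r x _ h1 => simp [smul_comm a r, h1]
  obtain ⟨N, hN⟩ := hN
  obtain ⟨k, hk⟩ := Ideal.exists_pow_inf_eq_pow_smul m (M := R) I
  have hk := hk (N + k) (by omega)
  have hle : m ^ (N + k) ⊓ I ≤ m ^ N * I := by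
    have : m ^ (N + k) ⊓ I = m ^ (N + k) • ⊤ ⊓ I := by simp
    rw [this, hk, Nat.add_sub_cancel]
    exact Submodule.smul_mono le_rfl inf_le_right
  have hz : ∀ x (hx : x ∈ I), x ∈ m ^ (N + k) → (g ⟨x, hx⟩ : J) = 0 := by
    intro x hx hx2
    have h3 : x ∈ m ^ N * I := hle ⟨hx2, hx⟩
    have h4 : m ^ N * I ≤ ((LinearMap.ker ((Gam m J).subtype ∘ₗ g)).map I.subtype : Ideal R) := by
      rw [Ideal.mul_le]
      intro a ha b hb
      exact ⟨a • ⟨b, hb⟩, by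
        rw [SetLike.mem_coe, LinearMap.mem_ker, map_smul]
        exact hN ⟨b, hb⟩ a ha, rfl⟩
    obtain ⟨y, hy, rfl⟩ := h4 h3
    simpa using hy
  obtain ⟨h, hh⟩ := inj_ext hJ ((m ^ (N + k)).mkQ ∘ₗ I.subtype) ((Gam m J).subtype ∘ₗ g) (by
    intro x hx
    have hx' : (x : R) ∈ m ^ (N + k) := by
      rw [LinearMap.mem_ker, LinearMap.comp_apply] at hx
      exact (Submodule.Quotient.mk_eq_zero _).1 hx
    exact hz x x.2 hx')
  refine ⟨(h ∘ₗ (m ^ (N + k)).mkQ).codRestrict _ fun x => ⟨N + k, fun a ha => ?_⟩, fun x hx => ?_⟩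
  · rw [← map_smul, LinearMap.comp_apply]
    have : (m ^ (N + k)).mkQ (a • x) = 0 := by
      rw [Submodule.mkQ_apply, Submodule.Quotient.mk_eq_zero]
      exact Ideal.mul_mem_right _ _ ha
    rw [this, map_zero]
  · ext; exact hh ⟨x, hx⟩

theorem cat_prime (h : CatAll R) (m P : Ideal R) (hm : m.IsMaximal) (hP : P.IsPrime) : P = m := by
  have := cat_noeth h
  obtain ⟨Q, hQ, f, hf⟩ := exists_inj_embed (R := R) (R ⧸ P)
  let X := (max #Q (Order.succ (#R + ℵ₀))).out
  obtain ⟨J, hJ, i, hi⟩ := exists_inj_embed (R := R) (X →₀ R ⧸ m)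
  have hT := Gam_inj m hJ
  have hX : #X ≤ #(Gam m J) := by
    have hmem : ∀ x : X, i (Finsupp.single x 1) ∈ Gam m J := fun x => ⟨1, fun a ha => by
      rw [← map_smul, Finsupp.smul_single]
      have : a • (1 : R ⧸ m) = 0 := by
        rw [Algebra.smul_def, mul_one]
        exact Ideal.Quotient.eq_zero_iff_mem.2 (by simpa using ha)
      rw [this]; simp⟩
    have : Nontrivial (R ⧸ m) := Ideal.Quotient.nontrivial_iff.2 hm.ne_top
    refine mk_le_of_injective (f := fun x => ⟨_, hmem x⟩) fun x y hxy => ?_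
    exact Finsupp.single_left_injective one_ne_zero (hi (Subtype.ext_iff.1 hxy))
  rw [mk_out] at hX
  obtain ⟨e⟩ := cat_swallow h (inj_locally hT) (inj_locally hQ)
    ((Order.lt_succ _).trans_le ((le_max_right _ _).trans hX)) ((le_max_left _ _).trans hX)
  obtain ⟨n, hn⟩ := (e.symm (f 1, 0)).2
  have hle : m ^ n ≤ P := by
    intro a ha
    have h1 : a • e.symm (f 1, 0) = 0 := Subtype.ext (hn a ha)
    rw [← map_smul, map_eq_zero_iff _ e.symm.injective] at h1
    have h2 : f (a • 1) = 0 := by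
      rw [map_smul]; exact congrArg Prod.fst h1
    rw [map_eq_zero_iff _ hf, Algebra.smul_def, mul_one] at h2
    exact Ideal.Quotient.eq_zero_iff_mem.1 h2
  exact (hm.eq_of_le hP.ne_top (hP.le_of_pow_le hle)).symm

theorem cat_forward (h : CatAll R) : IsLocalRing R ∧ IsArtinianRing R := by
  have := cat_noeth h
  have := cat_nontrivial h
  obtain ⟨m, hm⟩ := Ideal.exists_maximal R
  have h1 : IsLocalRing R := IsLocalRing.of_unique_max_ideal
    ⟨m, hm, fun P hP => cat_prime h m P hm hP.isPrime⟩
  refine ⟨h1, isArtinianRing_iff_krullDimLE_zero.2 ?_⟩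
  exact Ring.krullDimLE_zero_iff.2 fun P hP => cat_prime h m P hm hP ▸ hm

/-- socle with respect to the ideal `m` -/
abbrev Soc (m : Ideal R) (M : Type u) [AddCommGroup M] [Module R M] : Submodule R M :=
  Submodule.torsionBySet R M (m : Set R)

theorem mem_Soc {m : Ideal R} {M : Type u} [AddCommGroup M] [Module R M] {x : M} :
    x ∈ Soc m M ↔ ∀ a ∈ m, a • x = 0 := by
  simp [Soc, Submodule.mem_torsionBySet_iff]

theorem soc_card (m : Ideal R) (hm : m.FG) (hnil : IsNilpotent m)
    (M : Type u) [AddCommGroup M] [Module R M] :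
    #M ≤ max #(Soc m M) ℵ₀ := by
  obtain ⟨s, hs⟩ := hm
  set B := max #(Soc m M) ℵ₀ with hB
  have hBa : ℵ₀ ≤ B := le_max_right _ _
  have key : ∀ j : ℕ, #(Soc (m ^ j) M) ≤ B := by
    intro j
    induction j with
    | zero =>
      have : Subsingleton (Soc (m ^ 0) M) := ⟨fun x y => by
        have hx : ∀ z : Soc (m ^ 0) M, z = 0 := fun z => Subtype.ext (by
          simpa using mem_Soc.1 z.2 1 (by simp))
        rw [hx x, hx y]⟩
      exact (Cardinal.le_one_iff_subsingleton.2 this).trans (one_le_aleph0.trans hBa)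
    | succ j ih =>
      have hsm : ∀ a ∈ s, a ∈ m := fun a ha => hs ▸ Submodule.subset_span ha
      let φ : Soc (m ^ (j + 1)) M →ₗ[R] (s → Soc (m ^ j) M) := LinearMap.pi fun a =>
        (LinearMap.lsmul R M a.1 ∘ₗ (Soc (m ^ (j + 1)) M).subtype).codRestrict _ fun x => by
          rw [mem_Soc]
          intro b hb
          have := mem_Soc.1 x.2 (b * a) (by rw [pow_succ]; exact Ideal.mul_mem_mul hb (hsm a a.2))
          simpa [mul_smul] using this
      have hker : #(LinearMap.ker φ) ≤ B := by
        refine le_trans ?_ (le_max_left _ _)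
        refine mk_le_of_injective (f := fun x => (⟨x.1.1, ?_⟩ : Soc m M)) ?_
        · rw [mem_Soc]
          intro a ha
          rw [← hs] at ha
          induction ha using Submodule.span_induction with
          | mem a ha =>
            have := congrFun (LinearMap.mem_ker.1 x.2) ⟨a, ha⟩
            exact congrArg Subtype.val this
          | zero => simp
          | add a b _ _ h1 h2 => rw [add_smul, h1, h2, add_zero]
          | smul r a _ h1 => rw [smul_assoc, h1, smul_zero]
        · intro x y hxy
          have h3 := congrArg (fun z : Soc m M => (z.1 : M)) hxy
          exact Subtype.ext (Subtype.ext h3)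
      have hran : #(_ ⧸ LinearMap.ker φ) ≤ B := by
        have h1 : #(_ ⧸ LinearMap.ker φ) ≤ #(s → Soc (m ^ j) M) :=
          mk_le_of_injective (f := (LinearMap.ker φ).liftQ φ le_rfl) (by
            rw [← LinearMap.ker_eq_bot]; exact Submodule.ker_liftQ_eq_bot _ _ _ le_rfl)
        refine h1.trans ?_
        rw [← power_def, Cardinal.mk_coe_finset]
        exact (power_le_power_right ih).trans (power_nat_le hBa)
      have he : #(Soc (m ^ (j + 1)) M) = #((_ ⧸ LinearMap.ker φ) × LinearMap.ker φ) :=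
        Cardinal.mk_congr (AddSubgroup.addGroupEquivQuotientProdAddSubgroup
          (s := (LinearMap.ker φ).toAddSubgroup))
      rw [he, mk_prod, lift_id, lift_id]
      exact (mul_le_mul' hran hker).trans (mul_eq_self hBa).le
  obtain ⟨n, hn⟩ := hnil
  refine le_trans ?_ (key n)
  refine mk_le_of_injective (f := fun x => (⟨x, ?_⟩ : Soc (m ^ n) M)) ?_
  · rw [mem_Soc, hn]
    rintro a rfl
    simp
  · intro x y hxy
    exact Subtype.ext_iff.1 hxy

theorem soc_ess (m : Ideal R) (hnil : IsNilpotent m) {M : Type u} [AddCommGroup M] [Module R M]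
    (K : Submodule R M) (hK : ∀ x ∈ K, x ∈ Soc m M → x = 0) : K = ⊥ := by
  have key : ∀ j : ℕ, ∀ x ∈ K, (∀ a ∈ m ^ j, a • x = 0) → x = 0 := by
    intro j
    induction j with
    | zero => intro x _ h; simpa using h 1 (by simp)
    | succ j ih =>
      intro x hx h
      refine hK x hx (mem_Soc.2 fun a ha => ih _ (K.smul_mem a hx) fun b hb => ?_)
      rw [← mul_smul]
      exact h _ (by rw [pow_succ]; exact Ideal.mul_mem_mul hb ha)
  obtain ⟨n, hn⟩ := hnil
  rw [eq_bot_iff]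
  intro x hx
  refine key n x hx fun a ha => ?_
  rw [hn] at ha
  rw [(Submodule.mem_bot R).1 ha, zero_smul]

theorem soc_iso (m : Ideal R) (hnil : IsNilpotent m) {M N : Type u} [AddCommGroup M] [Module R M]
    [AddCommGroup N] [Module R N] (hM : Module.Injective R M) (hN : Module.Injective R N)
    (e : Soc m M ≃ₗ[R] Soc m N) : Nonempty (M ≃ₗ[R] N) := by
  obtain ⟨f, hf⟩ := hN.out (Soc m M).subtype Subtype.val_injective ((Soc m N).subtype ∘ₗ e.toLinearMap)
  have hfi : LinearMap.ker f = ⊥ := soc_ess m hnil _ fun x hx hs => by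
    have h1 := hf ⟨x, hs⟩
    rw [Submodule.subtype_apply, LinearMap.mem_ker.1 hx] at h1
    have h2 : e ⟨x, hs⟩ = 0 := Subtype.ext h1.symm
    rw [map_eq_zero_iff _ e.injective] at h2
    exact congrArg Subtype.val h2
  obtain ⟨p, hp⟩ := hM.out f (LinearMap.ker_eq_bot.1 hfi) LinearMap.id
  have hpi : LinearMap.ker p = ⊥ := soc_ess m hnil _ fun y hy hs => by
    have h1 := hf (e.symm ⟨y, hs⟩)
    have h2 : f (e.symm ⟨y, hs⟩) = y := by simpa using h1
    have h3 := hp (e.symm ⟨y, hs⟩)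
    rw [h2, LinearMap.mem_ker.1 hy] at h3
    rw [← h2, ← LinearMap.id_apply (R := R) (e.symm ⟨y, hs⟩ : M), ← h3, map_zero]
  refine ⟨LinearEquiv.ofLinearMap f p ?_ ?_⟩
  · ext y
    exact LinearMap.ker_eq_bot.1 hpi (by simp [hp])
  · ext x; simp [hp]

theorem dim_card {k V : Type u} [Field k] [AddCommGroup V] [Module k V] (c : Cardinal.{u})
    (hk : #k < c) (hc : ℵ₀ < c) (hV : #V = c) : Module.rank k V = c := by
  let b := Module.Basis.ofVectorSpace k V
  rw [← b.mk_eq_rank'']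
  have h1 : #V = #(Module.Basis.ofVectorSpaceIndex k V →₀ k) := mk_congr b.repr.toEquiv
  rcases finite_or_infinite (Module.Basis.ofVectorSpaceIndex k V) with hf | hi
  · exfalso
    have := Fintype.ofFinite (Module.Basis.ofVectorSpaceIndex k V)
    rw [mk_finsupp_of_fintype] at h1
    have h2 := h1.le.trans power_nat_le_max
    rw [hV] at h2
    exact absurd h2 (not_le.2 (max_lt hk hc))
  · rw [mk_finsupp_of_infinite, hV] at h1
    rcases le_total #(Module.Basis.ofVectorSpaceIndex k V) #k with h | h
    · rw [max_eq_right h] at h1; exact absurd h1 hk.ne'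
    · rw [max_eq_left h] at h1; exact h1.symm

theorem quot_card (m : Ideal R) : #(R ⧸ m) ≤ #R := mk_le_of_surjective Ideal.Quotient.mk_surjective

theorem soc_card_eq (m : Ideal R) (hm : m.FG) (hnil : IsNilpotent m)
    (M : Type u) [AddCommGroup M] [Module R M] (hc : ℵ₀ < #M) : #(Soc m M) = #M := by
  refine le_antisymm (mk_le_of_injective Subtype.val_injective) ?_
  by_contra h
  exact absurd (soc_card m hm hnil M) (not_le.2 (max_lt (not_le.1 h) hc))

theorem back_unique (m : Ideal R) [hmax : m.IsMaximal] (hm : m.FG) (hnil : IsNilpotent m)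
    {M N : Type u} [AddCommGroup M] [Module R M] [AddCommGroup N] [Module R N]
    (hM : Module.Injective R M) (hN : Module.Injective R N) (c : Cardinal.{u}) (hc : #R + ℵ₀ < c)
    (h1 : #M = c) (h2 : #N = c) : Nonempty (M ≃ₗ[R] N) := by
  let _ := Ideal.Quotient.field m
  have hca : ℵ₀ < c := (self_le_add_left _ _).trans_lt hc
  have hck : #(R ⧸ m) < c := (quot_card m).trans_lt ((self_le_add_right _ _).trans_lt hc)
  have r1 : Module.rank (R ⧸ m) (Soc m M) = c :=
    dim_card c hck hca ((soc_card_eq m hm hnil M (h1 ▸ hca)).trans h1)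
  have r2 : Module.rank (R ⧸ m) (Soc m N) = c :=
    dim_card c hck hca ((soc_card_eq m hm hnil N (h2 ▸ hca)).trans h2)
  obtain ⟨e⟩ := nonempty_linearEquiv_of_rank_eq (r1.trans r2.symm)
  exact soc_iso m hnil hM hN
    { e with map_smul' := fun r x => e.map_smul (Ideal.Quotient.mk m r) x }

def socRes (m : Ideal R) (J : Type u) [AddCommGroup J] [Module R J] :
    Module.End R J →+* Module.End R (Soc m J) where
  toFun φ := φ.restrict (p := Soc m J) (q := Soc m J) fun x hx => mem_Soc.2 fun a ha => by
    rw [← map_smul, mem_Soc.1 hx a ha, map_zero]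
  map_one' := rfl
  map_mul' _ _ := rfl
  map_zero' := rfl
  map_add' _ _ := rfl

theorem socRes_apply (m : Ideal R) (J : Type u) [AddCommGroup J] [Module R J]
    (φ : Module.End R J) (x : Soc m J) : (socRes m J φ x : J) = φ x := rfl

theorem socRes_nil (m : Ideal R) (hnil : IsNilpotent m) (J : Type u) [AddCommGroup J] [Module R J] :
    ∀ φ ∈ RingHom.ker (socRes m J), IsNilpotent φ := by
  intro φ hφ
  have hz : ∀ x ∈ Soc m J, φ x = 0 := fun x hx => by
    rw [← socRes_apply m J φ ⟨x, hx⟩, RingHom.mem_ker.1 hφ]; rfl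
  have key : ∀ j : ℕ, ∀ y : J, (∀ a ∈ m ^ j, a • y = 0) → (φ ^ j) y = 0 := by
    intro j
    induction j with
    | zero => intro y h; simpa using h 1 (by simp)
    | succ j ih =>
      intro y h
      rw [pow_succ, Module.End.mul_apply]
      refine ih _ fun a ha => ?_
      rw [← map_smul]
      refine hz _ (mem_Soc.2 fun b hb => ?_)
      rw [← mul_smul, mul_comm]
      exact h _ (by rw [pow_succ]; exact Ideal.mul_mem_mul ha hb)
  obtain ⟨n, hn⟩ := hnil
  refine ⟨n, LinearMap.ext fun y => key n y fun a ha => ?_⟩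
  rw [hn] at ha
  rw [(Submodule.mem_bot R).1 ha, zero_smul]

theorem back_exists (m : Ideal R) [hmax : m.IsMaximal] (hm : m.FG) (hnil : IsNilpotent m)
    (c : Cardinal.{u}) (hc : #R + ℵ₀ < c) :
    ∃ M : ModuleCat.{u} R, Module.Injective R M ∧ #M = c := by
  let _ := Ideal.Quotient.field m
  have hca : ℵ₀ < c := (self_le_add_left _ _).trans_lt hc
  have hck : #(R ⧸ m) < c := (quot_card m).trans_lt ((self_le_add_right _ _).trans_lt hc)
  let X := c.out
  have hXc : #X = c := mk_out c
  have : Infinite X := infinite_iff.2 (hXc ▸ hca.le)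
  have hV0 : #(X →₀ R ⧸ m) = c := by
    rw [mk_finsupp_of_infinite, hXc]; exact max_eq_left hck.le
  obtain ⟨J, hJ, f, hf⟩ := exists_inj_embed (R := R) (X →₀ R ⧸ m)
  have hfs : ∀ x, f x ∈ Soc m J := fun x => mem_Soc.2 fun a ha => by
    rw [← map_smul]
    have : a • x = 0 := by
      ext i
      rw [Finsupp.smul_apply, Algebra.smul_def]
      have : algebraMap R (R ⧸ m) a = 0 := Ideal.Quotient.eq_zero_iff_mem.2 ha
      rw [this, zero_mul]; rfl
    rw [this, map_zero]
  let f' : (X →₀ R ⧸ m) →ₗ[R] Soc m J := f.codRestrict _ hfs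
  have hf' : Function.Injective f' := fun x y hxy => hf (congrArg Subtype.val hxy)
  let V := LinearMap.range f'
  have hVc : #V = c := by
    rw [← hV0]; exact (mk_congr (LinearEquiv.ofInjective f' hf').toEquiv).symm
  have hss : IsSemisimpleModule R (Soc m J) := by
    have ht : Module.IsTorsionBySet R (Soc m J) (m : Set R) :=
      Submodule.torsionBySet_isTorsionBySet _
    rw [← ht.isSemisimpleModule_iff]
    infer_instance
  obtain ⟨W, hW⟩ := exists_isCompl V
  let p : Module.End R (Soc m J) := V.projection W hW
  have hp : IsIdempotentElem p := Submodule.isIdempotentElem_projection hW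
  have hpV : ∀ x, p x = x ↔ x ∈ V := fun x => Submodule.projection_eq_self_iff hW x
  have hpr : p ∈ (socRes m J).range := by
    obtain ⟨q, hq⟩ := hJ.out (Soc m J).subtype Subtype.val_injective ((Soc m J).subtype ∘ₗ p)
    exact ⟨q, LinearMap.ext fun x => Subtype.ext (hq x)⟩
  obtain ⟨e, he, hep⟩ := exists_isIdempotentElem_eq_of_ker_isNilpotent (socRes m J)
    (socRes_nil m hnil J) p hpr hp
  have hee : ∀ x, e (e x) = e x := fun x => LinearMap.congr_fun he x
  have hes : ∀ x : Soc m J, e x = p x := fun x => by rw [← hep]; rfl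
  let H := LinearMap.range e
  have hH : Module.Injective R H := by
    refine inj_retract H.subtype e.rangeRestrict ?_ hJ
    rintro ⟨_, x, rfl⟩
    exact Subtype.ext (hee x)
  refine ⟨ModuleCat.of R H, hH, ?_⟩
  show #H = c
  apply le_antisymm
  · refine (soc_card m hm hnil H).trans (max_le ?_ hca.le)
    rw [← hVc]
    have hs : ∀ x : Soc m H, (x.1.1 : J) ∈ Soc m J := fun x => mem_Soc.2 fun a ha =>
      congrArg Subtype.val (mem_Soc.1 x.2 a ha)
    have hs2 : ∀ x : Soc m H, (⟨x.1.1, hs x⟩ : Soc m J) ∈ V := fun x => by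
      rw [← hpV]
      apply Subtype.ext
      rw [← hes]
      obtain ⟨y, hy⟩ := x.1.2
      show e x.1.1 = x.1.1
      rw [← hy, hee]
    refine mk_le_of_injective (f := fun x => (⟨_, hs2 x⟩ : V)) fun x y hxy => ?_
    have := congrArg (fun z : V => (z.1.1 : J)) hxy
    exact Subtype.ext (Subtype.ext this)
  · rw [← hVc]
    refine mk_le_of_injective (f := fun x : V => (⟨x.1.1, x.1.1, ?_⟩ : H)) fun x y hxy => ?_
    · rw [hes, (hpV _).2 x.2]
    · have h3 := congrArg (fun z : H => (z.1 : J)) hxy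
      exact Subtype.ext (Subtype.ext h3)

end helpers

theorem stmt8 (R : Type u) [CommRing R] :
    (∀ c : Cardinal.{u}, #R + ℵ₀ < c →
      Categorical R (fun M => LocallyInjective R (M : Type u)) c) ↔
    (IsLocalRing R ∧ IsArtinianRing R) := by
  refine ⟨fun h => cat_forward h, ?_⟩
  rintro ⟨h1, h2⟩ c hc
  have hnil := (isArtinianRing_iff_isNilpotent_maximalIdeal R).1 h2
  have hfg : (IsLocalRing.maximalIdeal R).FG := IsNoetherian.noetherian _
  obtain ⟨M, hM, hMc⟩ := back_exists _ hfg hnil c hc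
  exact ⟨⟨M, inj_locally hM, hMc⟩, fun A B hA hB hAc hBc =>
    back_unique _ hfg hnil (noeth_locally_inj hA) (noeth_locally_inj hB) c hc hAc hBc⟩
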